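/- arXiv:1309.0422 — 2 statements merged into one kernel-verified Lean document; each statement's English description precedes it below -/
import Mathlib

section
/- Let G, n, m, L and k be as in the context. If L has a common supersequence over Σ₃ of length at most 168n² + 37n − 3 + k, then G has a vertex cover of size at most k. -/
/-- `(0202)^k` over Σ₃. -/
def pow0202 (k : ℕ) : List (Fin 3) := (List.replicate k [(0 : Fin 3), 2, 0, 2]).flatten

/-- `A_i = (0202)^{6n(i-1)+3n} 1 (0202)^{6n(n+1-i)}`. -/
def Aword (n i : ℕ) : List (Fin 3) :=
  pow0202 (6 * n * (i - 1) + 3 * n) ++ [1] ++ pow0202 (6 * n * (n + 1 - i))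

/-- `B_j = (0202)^j 1 (0202)^{36n²-j}`. -/
def Bword (n j : ℕ) : List (Fin 3) := pow0202 j ++ [1] ++ pow0202 (36 * n ^ 2 - j)

/-- `X_i^j = A_i B_j`. -/
def Xword (n i j : ℕ) : List (Fin 3) := Aword n i ++ Bword n j

/-- `T_l` for the edge `e_l = v_i v_j`, `i < j`. -/
def Tword (n i j : ℕ) : List (Fin 3) :=
  pow0202 (6 * n * (i - 1)) ++ [1] ++ pow0202 (6 * n * (j - i - 1) + 3 * n) ++ [1]
    ++ pow0202 (6 * n * (n + 2 - j)) ++ pow0202 (36 * n ^ 2 - 1)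

lemma pow0202_add (a b : ℕ) : pow0202 (a + b) = pow0202 a ++ pow0202 b := by
  rw [pow0202, List.replicate_add, List.flatten_append, pow0202, pow0202]

lemma length_pow0202 (k : ℕ) : (pow0202 k).length = 4 * k := by
  simp [pow0202, mul_comm]

lemma count_one_pow0202 (k : ℕ) : (pow0202 k).count 1 = 0 := by
  simp [pow0202, List.count_flatten]

/-- The largest `m` such that `(0202)^m` is a subsequence of `l`. -/
def blockCount (l : List (Fin 3)) : ℕ :=
  Nat.findGreatest (fun m => (pow0202 m).Sublist l) l.length

lemma pow0202_blockCount_sublist (l : List (Fin 3)) : (pow0202 (blockCount l)).Sublist l := by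
  apply Nat.findGreatest_spec (P := fun m => (pow0202 m).Sublist l) (Nat.zero_le _)
  simp [pow0202]

lemma le_blockCount {m : ℕ} {l : List (Fin 3)} (h : (pow0202 m).Sublist l) :
    m ≤ blockCount l := by
  apply Nat.le_findGreatest _ h
  have := h.length_le
  rw [length_pow0202] at this
  omega

/-- The positions of the letter `1` in `S`. -/
def onePositions (S : List (Fin 3)) : Finset ℕ :=
  (Finset.range S.length).filter fun p => S[p]? = some 1

lemma card_onePositions (S : List (Fin 3)) : (onePositions S).card = S.count 1 := by
  unfold onePositions
  induction S with
  | nil => simp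
  | cons a S ih =>
    rw [Finset.card_filter] at ih ⊢
    rw [List.length_cons, Finset.sum_range_succ', List.count_cons, ← ih]
    simp

lemma length_mem_onePositions (P R : List (Fin 3)) :
    P.length ∈ onePositions (P ++ 1 :: R) := by
  simp [onePositions]

lemma exists_split_of_cons_append_sublist {l r S : List (Fin 3)} {x : Fin 3}
    (h : (l ++ x :: r).Sublist S) :
    ∃ P R, S = P ++ x :: R ∧ l.Sublist P ∧ r.Sublist R := by
  obtain ⟨S₁, S₂, rfl, hl, hr⟩ := List.append_sublist_iff.1 h
  obtain ⟨U, W, rfl, hx, hW⟩ := List.cons_sublist_iff.1 hr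
  obtain ⟨U₁, U₂, rfl⟩ := List.append_of_mem hx
  refine ⟨S₁ ++ U₁, U₂ ++ W, by simp, hl.trans (List.sublist_append_left _ _),
    hW.trans (List.sublist_append_right _ _)⟩

/-- A subsequence `(0202)^a 1 (0202)^b 1 (0202)^d` of `S` yields two ones of `S`, at positions
constrained by the number of blocks available before each of them. -/
lemma exists_onePositions_of_sublist {S : List (Fin 3)} {a b d : ℕ}
    (h : (pow0202 a ++ 1 :: (pow0202 b ++ 1 :: pow0202 d)).Sublist S) :
    ∃ p ∈ onePositions S, ∃ q ∈ onePositions S,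
      a ≤ blockCount (S.take p) ∧
      blockCount (S.take p) + b ≤ blockCount (S.take q) ∧
      4 * (blockCount (S.take q) + d) + (onePositions S).card ≤ S.length := by
  obtain ⟨P, R, rfl, ha, h⟩ := exists_split_of_cons_append_sublist h
  obtain ⟨Q, R, rfl, hb, hd⟩ := exists_split_of_cons_append_sublist h
  have htake : (P ++ 1 :: (Q ++ 1 :: R)).take (P ++ 1 :: Q).length = P ++ 1 :: Q := by
    have : P ++ 1 :: (Q ++ 1 :: R) = (P ++ 1 :: Q) ++ 1 :: R := by simp
    rw [this, List.take_left]
  refine ⟨P.length, length_mem_onePositions _ _, (P ++ 1 :: Q).length, ?_, ?_, ?_, ?_⟩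
  · simpa using length_mem_onePositions (P ++ 1 :: Q) R
  · rw [List.take_left]
    exact le_blockCount ha
  · rw [htake, List.take_left]
    apply le_blockCount
    rw [pow0202_add]
    exact (pow0202_blockCount_sublist P).append (hb.trans (List.sublist_cons_self _ _))
  · rw [htake, card_onePositions]
    set m := blockCount (P ++ 1 :: Q)
    have hsub : (pow0202 (m + d)).Sublist (P ++ 1 :: (Q ++ 1 :: R)) := by
      have := (pow0202_blockCount_sublist (P ++ 1 :: Q)).append
        (hd.trans (List.sublist_cons_self 1 R))
      rw [pow0202_add]
      simpa using this
    have hlen := List.Sublist.length_le (hsub.filter (· ≠ 1))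
    have hpow : ((pow0202 (m + d)).filter (· ≠ 1)).length = 4 * (m + d) := by
      rw [← length_pow0202, List.filter_eq_self.2]
      intro x hx
      have := List.count_eq_zero.1 (count_one_pow0202 (m + d))
      simp only [decide_eq_true_eq]
      rintro rfl
      exact this hx
    rw [hpow, ← List.countP_eq_length_filter] at hlen
    have hsum := List.length_eq_countP_add_countP (fun x : Fin 3 => x == 1)
      (l := P ++ 1 :: (Q ++ 1 :: R))
    have hcount : List.countP (fun x : Fin 3 => decide (x ≠ 1)) (P ++ 1 :: (Q ++ 1 :: R))
        = List.countP (fun x : Fin 3 => decide ¬((x == 1) = true)) (P ++ 1 :: (Q ++ 1 :: R)) := by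
      congr 1
      ext x
      simp
    rw [hcount] at hlen
    rw [hsum, List.count]
    omega

/-- If every `j ≤ J` is served by some `q ∈ B` with `D + j ≤ c q ≤ D + w + j`, then
`J + 1 ≤ (w + 1) |B|`. -/
lemma succ_le_mul_card_of_forall_exists {B : Finset ℕ} {c : ℕ → ℕ} {J D w : ℕ}
    (h : ∀ j ≤ J, ∃ q ∈ B, D + j ≤ c q ∧ c q ≤ D + w + j) :
    J + 1 ≤ (w + 1) * B.card := by
  choose! f hf using h
  rw [← Finset.card_range (J + 1)]
  apply Finset.card_le_mul_card_image_of_maps_to (f := f)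
  · intro j hj
    exact (hf j (by simpa [Nat.lt_succ_iff] using hj)).1
  · intro q _
    calc _ ≤ (Finset.Icc (c q - (D + w)) (c q - D)).card := by
          apply Finset.card_le_card
          intro j hj
          simp only [Finset.mem_filter, Finset.mem_range] at hj
          obtain ⟨hj, rfl⟩ := hj
          have := hf j (by omega)
          rw [Finset.mem_Icc]
          omega
      _ ≤ w + 1 := by
          rw [Nat.card_Icc]
          omega

/-- The counting core: `O` is a set of positions of ones, `c p` the number of blocks before `p`,
and `K` the number of blocks that fit into the whole word. -/
lemma exists_cover_of_positions {n k : ℕ} (hn : 1 ≤ n) (hk : k < n) {E : Finset (ℕ × ℕ)}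
    (hE : ∀ e ∈ E, 1 ≤ e.1 ∧ e.1 < e.2 ∧ e.2 ≤ n) (O : Finset ℕ) (c : ℕ → ℕ) (K : ℕ)
    (hlen : 4 * K + O.card ≤ 168 * n ^ 2 + 37 * n - 3 + k)
    (hX : ∀ i j, 1 ≤ i → i ≤ n → j ≤ 36 * n ^ 2 → ∃ p ∈ O, ∃ q ∈ O,
      6 * n * (i - 1) + 3 * n ≤ c p ∧ c p + (6 * n * (n + 1 - i) + j) ≤ c q ∧
      c q + (36 * n ^ 2 - j) ≤ K)
    (hT : ∀ e ∈ E, ∃ p ∈ O, ∃ q ∈ O,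
      6 * n * (e.1 - 1) ≤ c p ∧ c p + (6 * n * (e.2 - e.1 - 1) + 3 * n) ≤ c q ∧
      c q + (6 * n * (n + 2 - e.2) + (36 * n ^ 2 - 1)) ≤ K) :
    ∃ V' : Finset ℕ, V' ⊆ Finset.Icc 1 n ∧ V'.card ≤ k ∧
      ∀ e ∈ E, e.1 ∈ V' ∨ e.2 ∈ V' := by
  have hn2 : 1 ≤ n ^ 2 := Nat.one_le_pow _ _ hn
  -- `V` is the number of spare blocks.
  obtain ⟨V, rfl⟩ : ∃ V, K = 42 * n ^ 2 + 3 * n + V := by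
    obtain ⟨p, -, q, -, h1, h2, h3⟩ := hX 1 0 le_rfl hn (Nat.zero_le _)
    apply Nat.exists_eq_add_of_le
    simp only [Nat.sub_self, Nat.add_sub_cancel, mul_zero, Nat.sub_zero] at h1 h2 h3
    nlinarith
  let B := O.filter fun q => 6 * n ^ 2 + 3 * n ≤ c q
  -- The least block count of a one usable for `A_i`, and the loss it entails.
  have hkey : ∀ t < n, ∃ p ∈ O, ∃ s ≤ V, c p = 6 * n * t + 3 * n + s ∧
      36 * n ^ 2 + 1 ≤ (V - s + 1) * B.card := by
    intro t ht
    have hmid : 6 * n * t + 6 * n * (n + 1 - (t + 1)) = 6 * n ^ 2 := by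
      obtain ⟨r, rfl⟩ := Nat.exists_eq_add_of_lt ht
      have : t + r + 1 + 1 - (t + 1) = r + 1 := by omega
      rw [this]
      ring
    have hX' := fun j => hX (t + 1) j (by omega) ht
    simp only [Nat.add_sub_cancel] at hX'
    have hne : (O.filter fun p => 6 * n * t + 3 * n ≤ c p).Nonempty := by
      obtain ⟨p, hp, -, -, h, -⟩ := hX' 0 (Nat.zero_le _)
      exact ⟨p, Finset.mem_filter.2 ⟨hp, h⟩⟩
    obtain ⟨p, hp, hmin⟩ := Finset.exists_min_image _ c hne
    rw [Finset.mem_filter] at hp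
    obtain ⟨s, hs⟩ := Nat.exists_eq_add_of_le hp.2
    have hq : ∀ j ≤ 36 * n ^ 2, ∃ q ∈ B, 6 * n ^ 2 + 3 * n + s + j ≤ c q ∧
        c q ≤ 6 * n ^ 2 + 3 * n + V + j := by
      intro j hj
      obtain ⟨p', hp', q, hq, h1, h2, h3⟩ := hX' j hj
      have := hmin p' (Finset.mem_filter.2 ⟨hp', h1⟩)
      refine ⟨q, Finset.mem_filter.2 ⟨hq, ?_⟩, ?_, ?_⟩ <;> omega
    have hsV : s ≤ V := by
      obtain ⟨q, -, h1, h2⟩ := hq 0 (Nat.zero_le _)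
      omega
    refine ⟨p, hp.1, s, hsV, hs, ?_⟩
    apply succ_le_mul_card_of_forall_exists (c := c) (D := 6 * n ^ 2 + 3 * n + s)
    intro j hj
    obtain ⟨q, hq, h1, h2⟩ := hq j hj
    exact ⟨q, hq, h1, by omega⟩
  have hamgm : ∀ w u : ℕ, 36 * n ^ 2 + 1 ≤ w * u → 24 * n + 1 ≤ u + 4 * w := by
    intro w u h
    by_contra! hlt
    zify at *
    nlinarith [sq_nonneg ((u : ℤ) - 4 * w)]
  have hBO : B.card ≤ O.card := Finset.card_filter_le _ _
  have hBV : 24 * n ≤ B.card + 4 * V + 3 := by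
    obtain ⟨-, -, s, hs, -, h⟩ := hkey 0 hn
    have := hamgm _ _ h
    omega
  have hV : V + 1 < 6 * n := by
    by_contra! hlt
    obtain ⟨-, -, s, hs, -, h⟩ := hkey 0 hn
    have h1 : V - s + 1 ≤ 7 * n := by omega
    have h2 : B.card ≤ 2 * n := by omega
    nlinarith [Nat.mul_le_mul h1 h2]
  let R : ℕ → Finset ℕ := fun i => O.filter fun p => c p / (6 * n) + 1 = i
  have hmemR : ∀ p ∈ O, ∀ t, 6 * n * t ≤ c p → c p < 6 * n * t + 6 * n → p ∈ R (t + 1) := by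
    intro p hp t h1 h2
    refine Finset.mem_filter.2 ⟨hp, ?_⟩
    rw [Nat.div_eq_of_lt_le (k := t)] <;> linarith
  have hpos : ∀ t < n, ∃ p ∈ R (t + 1), 6 * n * t + 3 * n ≤ c p := by
    intro t ht
    obtain ⟨p, hp, s, hs, hc, h⟩ := hkey t ht
    have := hamgm _ _ h
    exact ⟨p, hmemR p hp t (by omega) (by omega), by omega⟩
  have hsum : ∑ i ∈ Finset.Icc 1 n, (R i).card + B.card ≤ O.card := by
    let A := O.filter fun p => c p < 6 * n ^ 2
    have hA : ∑ i ∈ Finset.Icc 1 n, (R i).card ≤ A.card := by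
      rw [← Finset.card_biUnion]
      · apply Finset.card_le_card
        intro p hp
        simp only [R, Finset.mem_biUnion, Finset.mem_Icc, Finset.mem_filter] at hp
        obtain ⟨i, hi, hp, hc⟩ := hp
        refine Finset.mem_filter.2 ⟨hp, ?_⟩
        have : c p / (6 * n) < n := by omega
        rw [Nat.div_lt_iff_lt_mul (by omega)] at this
        nlinarith
      · intro i _ j _ hij
        rw [Function.onFun, Finset.disjoint_left]
        intro p hp hp'
        exact hij ((Finset.mem_filter.1 hp).2.symm.trans (Finset.mem_filter.1 hp').2)
    have hAB : Disjoint A B := by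
      rw [Finset.disjoint_left]
      intro p hp hp'
      have h1 := (Finset.mem_filter.1 hp).2
      have h2 := (Finset.mem_filter.1 hp').2
      omega
    calc _ ≤ A.card + B.card := by omega
      _ = (A ∪ B).card := (Finset.card_union_of_disjoint hAB).symm
      _ ≤ O.card := Finset.card_le_card
          (Finset.union_subset (Finset.filter_subset _ _) (Finset.filter_subset _ _))
  refine ⟨(Finset.Icc 1 n).filter fun i => 2 ≤ (R i).card, Finset.filter_subset _ _, ?_, ?_⟩
  · have hlow : n + ((Finset.Icc 1 n).filter fun i => 2 ≤ (R i).card).card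
        ≤ ∑ i ∈ Finset.Icc 1 n, (R i).card := by
      calc _ = ∑ i ∈ Finset.Icc 1 n, (1 + if 2 ≤ (R i).card then 1 else 0) := by
            rw [Finset.sum_add_distrib, Finset.card_filter]
            simp
        _ ≤ _ := by
            apply Finset.sum_le_sum
            intro i hi
            rw [Finset.mem_Icc] at hi
            obtain ⟨t, rfl⟩ := Nat.exists_eq_add_of_le' hi.1
            obtain ⟨p, hp, -⟩ := hpos t (by omega)
            have := Finset.card_pos.2 ⟨p, hp⟩
            split_ifs <;> omega
    omega
  · rintro ⟨i, j⟩ he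
    obtain ⟨hi, hij, hj⟩ := hE _ he
    obtain ⟨p, hp, q, hq, h1, h2, h3⟩ := hT _ he
    dsimp only at hi hij hj h1 h2 h3 ⊢
    by_contra! hcon
    simp only [Finset.mem_filter, Finset.mem_Icc, not_and, not_le] at hcon
    have hRi := Finset.card_le_one.1 (Nat.lt_succ_iff.1 (hcon.1 ⟨hi, by omega⟩))
    have hRj := Finset.card_le_one.1 (Nat.lt_succ_iff.1 (hcon.2 ⟨by omega, hj⟩))
    obtain ⟨t, rfl⟩ := Nat.exists_eq_add_of_le' hi
    obtain ⟨r, rfl⟩ := Nat.exists_eq_add_of_lt hij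
    obtain ⟨x, rfl⟩ := Nat.exists_eq_add_of_le hj
    obtain ⟨P, hP, hPc⟩ := hpos t (by omega)
    obtain ⟨Q, hQ, hQc⟩ := hpos (t + 1 + r) (by omega)
    rw [show t + 1 + r + 1 - (t + 1) - 1 = r by omega] at h2
    rw [show t + 1 + r + 1 + x + 2 - (t + 1 + r + 1) = x + 2 by omega] at h3
    rw [Nat.add_sub_cancel] at h1
    generalize hN : t + 1 + r + 1 + x = N at *
    have e1 : 6 * N * (t + 1 + r) = 6 * N * t + 6 * N * r + 6 * N := by ring
    have e2 : 6 * N * (x + 2) = 6 * N * x + 12 * N := by ring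
    have e3 : 6 * N ^ 2 = 6 * N * t + 6 * N * r + 6 * N * x + 12 * N := by
      rw [sq]
      nth_rewrite 2 [← hN]
      ring
    have hpR := hmemR p hp t h1 (by omega)
    obtain rfl := hRi p hpR P hP
    have hqR := hmemR q hq (t + 1 + r) (by omega) (by omega)
    obtain rfl := hRj q hqR Q hQ
    omega

theorem stmt_14 (n k : ℕ) (hn : 1 ≤ n) (E : Finset (ℕ × ℕ))
    (hE : ∀ e ∈ E, 1 ≤ e.1 ∧ e.1 < e.2 ∧ e.2 ≤ n)
    (hsup : ∃ S : List (Fin 3), S.length ≤ 168 * n ^ 2 + 37 * n - 3 + k ∧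
      (∀ i j, 1 ≤ i → i ≤ n → j ≤ 36 * n ^ 2 → (Xword n i j).Sublist S) ∧
      (∀ e ∈ E, (Tword n e.1 e.2).Sublist S)) :
    ∃ V' : Finset ℕ, V' ⊆ Finset.Icc 1 n ∧ V'.card ≤ k ∧
      ∀ e ∈ E, e.1 ∈ V' ∨ e.2 ∈ V' := by
  rcases le_or_gt n k with hk | hk
  · refine ⟨Finset.Icc 1 n, subset_rfl, by simpa using hk, fun e he => Or.inl ?_⟩
    have := hE e he
    rw [Finset.mem_Icc]
    omega
  obtain ⟨S, hlen, hX, hT⟩ := hsup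
  have hO : (onePositions S).card ≤ S.length := by
    rw [card_onePositions]
    exact List.count_le_length
  refine exists_cover_of_positions hn hk hE (onePositions S) (fun p => blockCount (S.take p))
    ((S.length - (onePositions S).card) / 4) (by omega) ?_ ?_
  · intro i j hi hi' hj
    have h := hX i j hi hi' hj
    obtain ⟨p, hp, q, hq, h1, h2, h3⟩ := exists_onePositions_of_sublist (S := S)
      (a := 6 * n * (i - 1) + 3 * n) (b := 6 * n * (n + 1 - i) + j) (d := 36 * n ^ 2 - j)
      (by simpa [Xword, Aword, Bword, pow0202_add] using h)
    exact ⟨p, hp, q, hq, h1, h2, by omega⟩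
  · intro e he
    have h := hT e he
    obtain ⟨p, hp, q, hq, h1, h2, h3⟩ := exists_onePositions_of_sublist (S := S)
      (a := 6 * n * (e.1 - 1)) (b := 6 * n * (e.2 - e.1 - 1) + 3 * n)
      (d := 6 * n * (n + 2 - e.2) + (36 * n ^ 2 - 1))
      (by simpa [Tword, pow0202_add] using h)
    exact ⟨p, hp, q, hq, h1, h2, by omega⟩
end

section
/- Let G, n, m, L and k be as in the context, with 0 ≤ k ≤ n. Let w be a word over Σ₂ = {0,1} such that S = φ(w) is a common supersequence of L and |S| ≤ 168n² + 37n − 3 + k, and write w = w' w'' where w' is the shortest prefix of w containing exactly 6n² + 3n occurrences of 0. Then for each i ∈ [1:n], w' contains an occurrence of the letter 1 that is preceded (within w') by at least 6n(i−1) + 3n and strictly fewer than 6in occurrences of 0. Consequently, w' contains at least n occurrences of the letter 1. -/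
/-- The morphism φ : Σ₂* → Σ₃* with φ(0) = 0202 and φ(1) = 1. -/
def phi : List (Fin 2) → List (Fin 3)
  | [] => []
  | a :: w => (if a = 0 then [0, 2, 0, 2] else [1]) ++ phi w

theorem count_zero_phi (w : List (Fin 2)) : (phi w).count 0 = 2 * w.count 0 := by
  induction w with
  | nil => simp [phi]
  | cons a w ih =>
    fin_cases a
    · simp [phi, ih]; omega
    · simp [phi, ih]

theorem length_phi (w : List (Fin 2)) : (phi w).length = 4 * w.count 0 + w.count 1 := by
  induction w with
  | nil => simp [phi]
  | cons a w ih =>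
    fin_cases a
    · simp [phi, ih]; omega
    · simp [phi, ih]; omega

theorem count_zero_pow0202 (k : ℕ) : (pow0202 k).count 0 = 2 * k := by
  induction k with
  | zero => simp [pow0202]
  | succ k ih =>
    have h : pow0202 (k + 1) = [0, 2, 0, 2] ++ pow0202 k := by
      simp [pow0202, List.replicate_succ]
    rw [h, List.count_append, ih]
    simp
    omega

/-- A letter `1` in a subsequence of `φ(w)` is matched with a letter `1` of `w`. -/
theorem exists_split_of_sublist_phi {w : List (Fin 2)} {u v : List (Fin 3)}
    (h : (u ++ 1 :: v).Sublist (phi w)) :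
    ∃ p q, w = p ++ 1 :: q ∧ u.Sublist (phi p) ∧ v.Sublist (phi q) := by
  induction w generalizing u with
  | nil => simp [phi] at h
  | cons a w ih =>
    rw [phi, List.sublist_append_iff] at h
    obtain ⟨l₁, l₂, h, h₁, h₂⟩ := h
    rcases List.append_eq_append_iff.mp h with ⟨t, rfl, ht⟩ | ⟨t, rfl, rfl⟩
    · cases t with
      | nil =>
        obtain ⟨p, q, rfl, hp, hq⟩ := ih (u := []) (by simp at ht; simpa [ht] using h₂)
        refine ⟨a :: p, q, rfl, ?_, hq⟩
        rw [phi]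
        simpa using h₁.trans (List.sublist_append_left _ _)
      | cons x t =>
        obtain ⟨rfl, rfl⟩ : 1 = x ∧ v = t ++ l₂ := by simpa using ht
        fin_cases a
        · have := h₁.subset (a := 1) (by simp)
          simp at this
        · have h₃ := h₁.length_le
          simp at h₃
          obtain ⟨hu, ht⟩ : u = [] ∧ t = [] := by
            constructor <;> apply List.eq_nil_of_length_eq_zero <;> omega
          subst hu ht
          exact ⟨[], w, rfl, by simp, by simpa using h₂⟩
    · obtain ⟨p, q, rfl, hp, hq⟩ := ih h₂
      exact ⟨a :: p, q, rfl, by rw [phi]; exact h₁.append hp, hq⟩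

/-- Letters `1` preceded by different numbers of `0` are different occurrences. -/
theorem card_le_count_one (w : List (Fin 2)) (s : Finset ℕ)
    (hs : ∀ c ∈ s, ∃ p q, w = p ++ 1 :: q ∧ p.count 0 = c) : s.card ≤ w.count 1 := by
  choose! p q hw hc using hs
  rw [← Finset.card_range (w.count 1)]
  refine Finset.card_le_card_of_injOn (fun c => (p c).count 1) ?_ ?_
  · intro c hcs
    have h := congrArg (List.count 1) (hw c hcs)
    simp at h ⊢
    omega
  · intro c hcs d hds hcd
    have h := (hw c hcs).symm.trans (hw d hds)
    have key : p c = p d := by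
      rcases List.append_eq_append_iff.mp h with ⟨t, ht, ht'⟩ | ⟨t, ht, ht'⟩ <;>
      · cases t with
        | nil => simp [ht]
        | cons x t =>
          obtain ⟨rfl, -⟩ : 1 = x ∧ _ := by simpa using ht'
          simp [ht] at hcd
    rw [← hc c hcs, ← hc d hds, key]

/-- If every window `[a + j, a + j + d]` with `j ≤ M` contains the number of `0`s preceding some
letter `1` of `w`, then `w` has more than `M / (d + 1)` letters `1`. -/
theorem lt_count_one_mul_of_windows (w : List (Fin 2)) (a d M : ℕ)
    (h : ∀ j ≤ M, ∃ p q, w = p ++ 1 :: q ∧ a + j ≤ p.count 0 ∧ p.count 0 ≤ a + j + d) :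
    M < w.count 1 * (d + 1) := by
  choose! p q hw hlo hhi using h
  have hle : ∀ t ∈ Finset.range (M / (d + 1) + 1), t * (d + 1) ≤ M := fun t ht =>
    (Nat.le_div_iff_mul_le d.succ_pos).mp (Nat.lt_succ_iff.mp (Finset.mem_range.mp ht))
  have hcard := card_le_count_one w
    ((Finset.range (M / (d + 1) + 1)).image fun t => (p (t * (d + 1))).count 0) (by
      intro c hc
      obtain ⟨t, ht, rfl⟩ := Finset.mem_image.mp hc
      exact ⟨_, _, hw _ (hle t ht), rfl⟩)
  rw [Finset.card_image_of_injOn, Finset.card_range] at hcard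
  · exact (Nat.div_lt_iff_lt_mul d.succ_pos).mp hcard
  · intro s hs t ht hst
    have hs₁ := hlo _ (hle s hs)
    have hs₂ := hhi _ (hle s hs)
    have ht₁ := hlo _ (hle t ht)
    have ht₂ := hhi _ (hle t ht)
    simp only at hst
    rcases lt_trichotomy s t with hlt | heq | hlt
    · have := Nat.mul_le_mul_right (d + 1) (Nat.succ_le_of_lt hlt)
      rw [Nat.succ_mul] at this
      omega
    · exact heq
    · have := Nat.mul_le_mul_right (d + 1) (Nat.succ_le_of_lt hlt)
      rw [Nat.succ_mul] at this
      omega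

/-- The two letters `1` of `X_i^j` in `φ(w)`, with the numbers of `0` around them. -/
theorem exists_split_of_Xword_sublist {n i j : ℕ} {w : List (Fin 2)}
    (h : (Xword n i j).Sublist (phi w)) :
    ∃ p q r, w = p ++ 1 :: (q ++ 1 :: r) ∧ 6 * n * (i - 1) + 3 * n ≤ p.count 0 ∧
      6 * n * (n + 1 - i) + j ≤ q.count 0 ∧ 36 * n ^ 2 - j ≤ r.count 0 := by
  have hX : Xword n i j = pow0202 (6 * n * (i - 1) + 3 * n) ++ 1 ::
      ((pow0202 (6 * n * (n + 1 - i)) ++ pow0202 j) ++ 1 :: pow0202 (36 * n ^ 2 - j)) := by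
    simp [Xword, Aword, Bword]
  rw [hX] at h
  obtain ⟨p, s, rfl, hp, hs⟩ := exists_split_of_sublist_phi h
  obtain ⟨q, r, rfl, hq, hr⟩ := exists_split_of_sublist_phi hs
  have hp' := hp.count_le 0
  have hq' := hq.count_le 0
  have hr' := hr.count_le 0
  simp only [List.count_append, count_zero_phi, count_zero_pow0202] at hp' hq' hr'
  exact ⟨p, q, r, rfl, by omega, by omega, by omega⟩

/-- A short common supersequence has a letter `1` in the zone of every vertex. -/
theorem exists_one_in_zone (n k i : ℕ) (hn : 1 ≤ n) (hk : k ≤ n) (hi : 1 ≤ i) (hin : i ≤ n)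
    (w : List (Fin 2))
    (hsupX : ∀ j ≤ 36 * n ^ 2, (Xword n i j).Sublist (phi w))
    (hlen : (phi w).length ≤ 168 * n ^ 2 + 37 * n - 3 + k) :
    ∃ p q, w = p ++ 1 :: q ∧
      6 * n * (i - 1) + 3 * n ≤ p.count 0 ∧ p.count 0 < 6 * i * n := by
  by_contra! hno
  obtain ⟨i, rfl⟩ := Nat.exists_eq_add_of_le' hi
  obtain ⟨m, rfl⟩ := Nat.exists_eq_add_of_le hin
  set n := i + 1 + m with hndef
  have hsub : n + 1 - (i + 1) = m + 1 := by omega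
  have hsum : 6 * (i + 1) * n + 6 * n * (m + 1) = 6 * n ^ 2 + 6 * n := by rw [hndef]; ring
  have key : ∀ j ≤ 36 * n ^ 2, ∃ p q, w = p ++ 1 :: q ∧ 6 * n ^ 2 + 6 * n + j ≤ p.count 0 ∧
      p.count 0 + (36 * n ^ 2 - j) ≤ w.count 0 := by
    intro j hj
    obtain ⟨p, q, r, hw, hp, hq, hr⟩ := exists_split_of_Xword_sublist (hsupX j hj)
    have hp' := hno p _ hw hp
    rw [hsub] at hq
    refine ⟨p ++ 1 :: q, r, by simp [hw], ?_, ?_⟩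
    · simp
      omega
    · rw [hw]
      simp
      omega
  obtain ⟨d, hd⟩ : ∃ d, w.count 0 = 42 * n ^ 2 + 6 * n + d := by
    obtain ⟨p, q, -, h₁, h₂⟩ := key 0 (Nat.zero_le _)
    exact Nat.exists_eq_add_of_le (by omega)
  have hM := lt_count_one_mul_of_windows w (6 * n ^ 2 + 6 * n) d (36 * n ^ 2) (by
    intro j hj
    obtain ⟨p, q, hw, h₁, h₂⟩ := key j hj
    exact ⟨p, q, hw, h₁, by omega⟩)
  rw [length_phi, hd] at hlen
  have hb : 4 * (d + 1) + w.count 1 ≤ 15 * n := by omega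
  zify at hM hb hn
  nlinarith [sq_nonneg (4 * ((d : ℤ) + 1) - w.count 1)]

theorem stmt_15 (n k : ℕ) (hn : 1 ≤ n) (hk : k ≤ n) (E : Finset (ℕ × ℕ))
    (hE : ∀ e ∈ E, 1 ≤ e.1 ∧ e.1 < e.2 ∧ e.2 ≤ n)
    (w w' w'' : List (Fin 2)) (hw : w = w' ++ w'')
    (hcount : w'.count 0 = 6 * n ^ 2 + 3 * n)
    (hshort : ∀ p : List (Fin 2), p <+: w → p.count 0 = 6 * n ^ 2 + 3 * n →
      w'.length ≤ p.length)
    (hsupX : ∀ i j, 1 ≤ i → i ≤ n → j ≤ 36 * n ^ 2 → (Xword n i j).Sublist (phi w))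
    (hsupT : ∀ e ∈ E, (Tword n e.1 e.2).Sublist (phi w))
    (hlen : (phi w).length ≤ 168 * n ^ 2 + 37 * n - 3 + k) :
    (∀ i, 1 ≤ i → i ≤ n → ∃ p q : List (Fin 2), w' = p ++ [1] ++ q ∧
        6 * n * (i - 1) + 3 * n ≤ p.count 0 ∧ p.count 0 < 6 * i * n) ∧
      n ≤ w'.count 1 := by
  have hzone : ∀ i, 1 ≤ i → i ≤ n → ∃ p q : List (Fin 2), w' = p ++ [1] ++ q ∧
      6 * n * (i - 1) + 3 * n ≤ p.count 0 ∧ p.count 0 < 6 * i * n := by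
    intro i hi hin
    obtain ⟨p, q, hpq, hlo, hhi⟩ := exists_one_in_zone n k i hn hk hi hin w
      (fun j hj => hsupX i j hi hin hj) hlen
    have hlt : p.count 0 < w'.count 0 := by
      have := Nat.mul_le_mul_right (6 * n) hin
      rw [hcount]
      nlinarith
    rcases List.append_eq_append_iff.mp (hpq.symm.trans hw) with ⟨t, ht, ht'⟩ | ⟨t, rfl, -⟩
    · cases t with
      | nil => simp [ht] at hlt
      | cons x t =>
        obtain ⟨rfl, -⟩ : 1 = x ∧ _ := by simpa using ht'
        exact ⟨p, t, by simp [ht], hlo, hhi⟩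
    · simp at hlt
  refine ⟨hzone, ?_⟩
  choose! p q hpq hlo hhi using hzone
  have hcard := card_le_count_one w' ((Finset.Icc 1 n).image fun i => (p i).count 0) (by
    intro c hc
    obtain ⟨i, hi, rfl⟩ := Finset.mem_image.mp hc
    obtain ⟨hi, hin⟩ := Finset.mem_Icc.mp hi
    exact ⟨_, q i, by simpa using hpq i hi hin, rfl⟩)
  have hdisj : ∀ i j, 1 ≤ i → i < j → j ≤ n → (p i).count 0 < (p j).count 0 := by
    intro i j hi hij hj
    have h₁ := hhi i hi (by omega)
    have h₂ := hlo j (by omega) hj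
    have h₃ := Nat.mul_le_mul_left (6 * n) (Nat.le_sub_one_of_lt hij)
    have h₄ : 6 * i * n = 6 * n * i := by ring
    omega
  rw [Finset.card_image_of_injOn, Nat.card_Icc, Nat.add_sub_cancel] at hcard
  · exact hcard
  · intro i hi j hj hij
    obtain ⟨hi, hin⟩ := Finset.mem_Icc.mp hi
    obtain ⟨hj, hjn⟩ := Finset.mem_Icc.mp hj
    simp only at hij
    rcases lt_trichotomy i j with h | h | h
    · have := hdisj i j hi h hjn
      omega
    · exact h
    · have := hdisj j i hj h hin
      omega
end
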